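/- The function μ is nondecreasing: for all 0 < s₁ ≤ s₂ one has −g·k ≤ μ(s₁) ≤ μ(s₂). -/

import Mathlib

open Set MeasureTheory intervalIntegral Filter Topology

noncomputable section

namespace RT

/-- The piecewise integral `∫_{-m}^0 + ∫_0^ℓ`. -/
def pwInt (m l : ℝ) (f : ℝ → ℝ) : ℝ :=
  (∫ x in (-m)..(0:ℝ), f x) + ∫ x in (0:ℝ)..l, f x

/-- `f` restricted to `[-m,0)` extends continuously to `[-m,0]`, and `f` restricted to
`(0,ℓ]` extends continuously to `[0,ℓ]`. -/
def PiecewiseCont (m l : ℝ) (f : ℝ → ℝ) : Prop :=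
  (∃ F : ℝ → ℝ, ContinuousOn F (Icc (-m) 0) ∧ EqOn f F (Ico (-m) 0)) ∧
  (∃ F : ℝ → ℝ, ContinuousOn F (Icc 0 l) ∧ EqOn f F (Ioc 0 l))

/-- A profile function: the restriction to `[-m,0)` extends continuously to `[-m,0]`, and
the function is continuous on `[0,ℓ]` (hence right-continuous at `0`). -/
def Profile (m l : ℝ) (f : ℝ → ℝ) : Prop :=
  (∃ F : ℝ → ℝ, ContinuousOn F (Icc (-m) 0) ∧ EqOn f F (Ico (-m) 0)) ∧
  ContinuousOn f (Icc 0 l)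

/-- The four steady-state profiles `ρ0, p, ε0, δ0` with their positivity assumptions. -/
def ProfilesHyp (m l : ℝ) (ρ0 p ε0 δ0 : ℝ → ℝ) : Prop :=
  Profile m l ρ0 ∧ Profile m l p ∧ Profile m l ε0 ∧ Profile m l δ0 ∧
  (∀ x ∈ Icc (-m) l, 0 < ρ0 x) ∧ (∀ x ∈ Icc (-m) l, 0 < p x) ∧
  (∀ x ∈ Icc (-m) l, 0 < ε0 x) ∧ (∀ x ∈ Icc (-m) l, 0 ≤ δ0 x)

/-- `f` is continuous on `[-m,ℓ]` and continuously differentiable on `[-m,0]` and on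
`[0,ℓ]`, with piecewise derivative `fd`. -/
def PiecewiseC1 (m l : ℝ) (f fd : ℝ → ℝ) : Prop :=
  ContinuousOn f (Icc (-m) l) ∧
  (∀ x ∈ Ico (-m) 0, HasDerivWithinAt f (fd x) (Icc (-m) 0) x) ∧
  (∀ x ∈ Ioc 0 l, HasDerivWithinAt f (fd x) (Icc 0 l) x) ∧
  PiecewiseCont m l fd

/-- An admissible pair `(φ,ψ)` with piecewise derivatives `(φd,ψd)`. -/
def Admissible (m l : ℝ) (φ ψ φd ψd : ℝ → ℝ) : Prop :=
  PiecewiseC1 m l φ φd ∧ PiecewiseC1 m l ψ ψd ∧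
  φ (-m) = 0 ∧ φ l = 0 ∧ ψ (-m) = 0 ∧ ψ l = 0

/-- The energy `E(φ,ψ;s)`. -/
def energyE (m l g σ k : ℝ) (ρ0 p ε0 δ0 : ℝ → ℝ) (φ ψ φd ψd : ℝ → ℝ) (s : ℝ) : ℝ :=
  σ * k ^ 2 / 2 * (ψ 0) ^ 2
  + (1 / 2) * pwInt m l (fun x =>
      (s * δ0 x + p x * ρ0 x) * (ψd x + k * φ x) ^ 2 - 2 * g * ρ0 x * k * φ x * ψ x)
  + (s / 2) * pwInt m l (fun x =>
      ε0 x * ((φd x - k * ψ x) ^ 2 + (ψd x - k * φ x) ^ 2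
        + (1 / 3) * (ψd x + k * φ x) ^ 2))

/-- The normalization functional `J(φ,ψ)`. -/
def energyJ (m l : ℝ) (ρ0 : ℝ → ℝ) (φ ψ : ℝ → ℝ) : ℝ :=
  (1 / 2) * pwInt m l (fun x => ρ0 x * ((φ x) ^ 2 + (ψ x) ^ 2))

/-- The viscous part `E1(φ,ψ)` of the energy. -/
def energyE1 (m l k : ℝ) (ε0 δ0 : ℝ → ℝ) (φ ψ φd ψd : ℝ → ℝ) : ℝ :=
  (1 / 2) * pwInt m l (fun x => (δ0 x + ε0 x / 3) * (ψd x + k * φ x) ^ 2)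
  + (1 / 2) * pwInt m l (fun x =>
      ε0 x * ((φd x - k * ψ x) ^ 2 + (ψd x - k * φ x) ^ 2))

/-- `μ(s)`: the infimum of `E(·,·;s)` over admissible pairs with `J = 1`. -/
def muInf (m l g σ k : ℝ) (ρ0 p ε0 δ0 : ℝ → ℝ) (s : ℝ) : ℝ :=
  sInf { e : ℝ | ∃ φ ψ φd ψd : ℝ → ℝ, Admissible m l φ ψ φd ψd ∧
    energyJ m l ρ0 φ ψ = 1 ∧ e = energyE m l g σ k ρ0 p ε0 δ0 φ ψ φd ψd s }

/-- The hydrostatic steady-state relation `ρ0' = -g ρ0 / p` on each piece. -/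
def Hydrostatic (m l g : ℝ) (ρ0 p : ℝ → ℝ) : Prop :=
  (∀ x ∈ Ico (-m) 0, HasDerivWithinAt ρ0 (-g * ρ0 x / p x) (Ico (-m) 0) x) ∧
  (∀ x ∈ Ioc 0 l, HasDerivWithinAt ρ0 (-g * ρ0 x / p x) (Ioc 0 l) x)

end RT

namespace RT

/-! The energy is affine in `s`: `E(s) = E(0) + s E₁` with `E₁ ≥ 0`, so it is nondecreasing in `s`
for each fixed pair. Young's inequality applied to the gravity term gives `E(0) ≥ -|g k| J`. The
competitors `J = 1` do not depend on `s`, so both facts pass to the infimum over them. -/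

section

variable {m l g σ k s s₁ s₂ : ℝ} {ρ0 p ε0 δ0 φ ψ φd ψd f fd h : ℝ → ℝ}

attribute [fun_prop] PiecewiseCont

theorem PiecewiseCont.comp₂ {Φ : ℝ → ℝ → ℝ} (hΦ : Continuous fun y : ℝ × ℝ => Φ y.1 y.2)
    (hf : PiecewiseCont m l f) (hh : PiecewiseCont m l h) :
    PiecewiseCont m l fun x => Φ (f x) (h x) := by
  obtain ⟨⟨F₁, hF₁, hfF₁⟩, F₂, hF₂, hfF₂⟩ := hf
  obtain ⟨⟨H₁, hH₁, hhH₁⟩, H₂, hH₂, hhH₂⟩ := hh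
  exact ⟨⟨fun x => Φ (F₁ x) (H₁ x), hΦ.comp_continuousOn (hF₁.prodMk hH₁),
      fun x hx => congrArg₂ Φ (hfF₁ hx) (hhH₁ hx)⟩,
    ⟨fun x => Φ (F₂ x) (H₂ x), hΦ.comp_continuousOn (hF₂.prodMk hH₂),
      fun x hx => congrArg₂ Φ (hfF₂ hx) (hhH₂ hx)⟩⟩

@[fun_prop]
theorem PiecewiseCont.const (c : ℝ) : PiecewiseCont m l fun _ => c :=
  ⟨⟨_, continuousOn_const, eqOn_refl _ _⟩, ⟨_, continuousOn_const, eqOn_refl _ _⟩⟩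

@[fun_prop]
theorem PiecewiseCont.add (hf : PiecewiseCont m l f) (hh : PiecewiseCont m l h) :
    PiecewiseCont m l fun x => f x + h x :=
  hf.comp₂ continuous_add hh

@[fun_prop]
theorem PiecewiseCont.sub (hf : PiecewiseCont m l f) (hh : PiecewiseCont m l h) :
    PiecewiseCont m l fun x => f x - h x :=
  hf.comp₂ continuous_sub hh

@[fun_prop]
theorem PiecewiseCont.mul (hf : PiecewiseCont m l f) (hh : PiecewiseCont m l h) :
    PiecewiseCont m l fun x => f x * h x :=
  hf.comp₂ continuous_mul hh

@[fun_prop]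
theorem PiecewiseCont.pow (hf : PiecewiseCont m l f) (n : ℕ) :
    PiecewiseCont m l fun x => f x ^ n :=
  hf.comp₂ (Φ := fun y _ => y ^ n) (by fun_prop) hf

@[fun_prop]
theorem PiecewiseCont.div_const (hf : PiecewiseCont m l f) (c : ℝ) :
    PiecewiseCont m l fun x => f x / c :=
  hf.comp₂ (Φ := fun y _ => y / c) (by fun_prop) hf

theorem Profile.piecewiseCont (hf : Profile m l f) : PiecewiseCont m l f :=
  ⟨hf.1, f, hf.2, eqOn_refl _ _⟩

theorem PiecewiseC1.piecewiseCont (hm : 0 ≤ m) (hl : 0 ≤ l) (hf : PiecewiseC1 m l f fd) :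
    PiecewiseCont m l f :=
  ⟨⟨f, hf.1.mono (Icc_subset_Icc_right hl), eqOn_refl _ _⟩,
    ⟨f, hf.1.mono (Icc_subset_Icc_left (neg_nonpos.2 hm)), eqOn_refl _ _⟩⟩

theorem PiecewiseC1.piecewiseCont_deriv (hf : PiecewiseC1 m l f fd) : PiecewiseCont m l fd :=
  hf.2.2.2

theorem PiecewiseCont.intervalIntegrable_left (hm : 0 ≤ m) (hf : PiecewiseCont m l f) :
    IntervalIntegrable f volume (-m) 0 := by
  obtain ⟨⟨F, hF, hfF⟩, -⟩ := hf
  refine (hF.intervalIntegrable_of_Icc (neg_nonpos.2 hm)).congr_uIoo fun x hx => ?_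
  rw [uIoo_of_le (neg_nonpos.2 hm)] at hx
  exact (hfF (Ioo_subset_Ico_self hx)).symm

theorem PiecewiseCont.intervalIntegrable_right (hl : 0 ≤ l) (hf : PiecewiseCont m l f) :
    IntervalIntegrable f volume 0 l := by
  obtain ⟨-, F, hF, hfF⟩ := hf
  refine (hF.intervalIntegrable_of_Icc hl).congr_uIoo fun x hx => ?_
  rw [uIoo_of_le hl] at hx
  exact (hfF (Ioo_subset_Ioc_self hx)).symm

theorem pwInt_const_mul (c : ℝ) (f : ℝ → ℝ) :
    pwInt m l (fun x => c * f x) = c * pwInt m l f := by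
  simp only [pwInt, intervalIntegral.integral_const_mul, mul_add]

theorem pwInt_add (hm : 0 ≤ m) (hl : 0 ≤ l) (hf : PiecewiseCont m l f)
    (hh : PiecewiseCont m l h) :
    pwInt m l (fun x => f x + h x) = pwInt m l f + pwInt m l h := by
  simp only [pwInt,
    integral_add (hf.intervalIntegrable_left hm) (hh.intervalIntegrable_left hm),
    integral_add (hf.intervalIntegrable_right hl) (hh.intervalIntegrable_right hl)]
  ring

theorem pwInt_mono (hm : 0 ≤ m) (hl : 0 ≤ l) (hf : PiecewiseCont m l f)
    (hh : PiecewiseCont m l h) (hfh : ∀ x ∈ Icc (-m) l, f x ≤ h x) :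
    pwInt m l f ≤ pwInt m l h :=
  add_le_add
    (integral_mono_on (neg_nonpos.2 hm) (hf.intervalIntegrable_left hm)
      (hh.intervalIntegrable_left hm) fun x hx => hfh x (Icc_subset_Icc_right hl hx))
    (integral_mono_on hl (hf.intervalIntegrable_right hl) (hh.intervalIntegrable_right hl)
      fun x hx => hfh x (Icc_subset_Icc_left (neg_nonpos.2 hm) hx))

theorem pwInt_nonneg (hm : 0 ≤ m) (hl : 0 ≤ l) (hf : ∀ x ∈ Icc (-m) l, 0 ≤ f x) :
    0 ≤ pwInt m l f :=
  add_nonneg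
    (integral_nonneg (neg_nonpos.2 hm) fun x hx => hf x (Icc_subset_Icc_right hl hx))
    (integral_nonneg hl fun x hx => hf x (Icc_subset_Icc_left (neg_nonpos.2 hm) hx))

theorem energyE_eq_add_mul_energyE1 (hm : 0 ≤ m) (hl : 0 ≤ l)
    (hρ : PiecewiseCont m l ρ0) (hp : PiecewiseCont m l p)
    (hε : PiecewiseCont m l ε0) (hδ : PiecewiseCont m l δ0)
    (hφ : PiecewiseCont m l φ) (hψ : PiecewiseCont m l ψ)
    (hφd : PiecewiseCont m l φd) (hψd : PiecewiseCont m l ψd) :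
    energyE m l g σ k ρ0 p ε0 δ0 φ ψ φd ψd s =
      energyE m l g σ k ρ0 p ε0 δ0 φ ψ φd ψd 0 + s * energyE1 m l k ε0 δ0 φ ψ φd ψd := by
  have bulk_split :
      pwInt m l (fun x => (s * δ0 x + p x * ρ0 x) * (ψd x + k * φ x) ^ 2
        - 2 * g * ρ0 x * k * φ x * ψ x) =
      pwInt m l (fun x => (0 * δ0 x + p x * ρ0 x) * (ψd x + k * φ x) ^ 2
        - 2 * g * ρ0 x * k * φ x * ψ x) +
      s * pwInt m l (fun x => δ0 x * (ψd x + k * φ x) ^ 2) := by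
    rw [← pwInt_const_mul, ← pwInt_add hm hl (by fun_prop) (by fun_prop)]
    exact congrArg _ (funext fun x => by ring)
  have viscous_regroup :
      pwInt m l (fun x => (δ0 x + ε0 x / 3) * (ψd x + k * φ x) ^ 2) +
        pwInt m l (fun x => ε0 x * ((φd x - k * ψ x) ^ 2 + (ψd x - k * φ x) ^ 2)) =
      pwInt m l (fun x => δ0 x * (ψd x + k * φ x) ^ 2) +
        pwInt m l (fun x => ε0 x * ((φd x - k * ψ x) ^ 2 + (ψd x - k * φ x) ^ 2
          + (1 / 3) * (ψd x + k * φ x) ^ 2)) := by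
    rw [← pwInt_add hm hl (by fun_prop) (by fun_prop),
      ← pwInt_add hm hl (by fun_prop) (by fun_prop)]
    exact congrArg _ (funext fun x => by ring)
  simp only [energyE, energyE1]
  linear_combination (1 / 2) * bulk_split - s / 2 * viscous_regroup

theorem energyE1_nonneg (hm : 0 ≤ m) (hl : 0 ≤ l)
    (hε : ∀ x ∈ Icc (-m) l, 0 ≤ ε0 x) (hδ : ∀ x ∈ Icc (-m) l, 0 ≤ δ0 x) :
    0 ≤ energyE1 m l k ε0 δ0 φ ψ φd ψd := by
  have bulk : 0 ≤ pwInt m l (fun x => (δ0 x + ε0 x / 3) * (ψd x + k * φ x) ^ 2) :=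
    pwInt_nonneg hm hl fun x hx => by
      have := hε x hx
      have := hδ x hx
      positivity
  have shear :
      0 ≤ pwInt m l (fun x => ε0 x * ((φd x - k * ψ x) ^ 2 + (ψd x - k * φ x) ^ 2)) :=
    pwInt_nonneg hm hl fun x hx => mul_nonneg (hε x hx) (by positivity)
  unfold energyE1
  positivity

theorem energyE_monotone (hm : 0 ≤ m) (hl : 0 ≤ l)
    (hρ : PiecewiseCont m l ρ0) (hp : PiecewiseCont m l p)
    (hε : PiecewiseCont m l ε0) (hδ : PiecewiseCont m l δ0)
    (hε_nonneg : ∀ x ∈ Icc (-m) l, 0 ≤ ε0 x) (hδ_nonneg : ∀ x ∈ Icc (-m) l, 0 ≤ δ0 x)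
    (hφ : PiecewiseCont m l φ) (hψ : PiecewiseCont m l ψ)
    (hφd : PiecewiseCont m l φd) (hψd : PiecewiseCont m l ψd) :
    Monotone (energyE m l g σ k ρ0 p ε0 δ0 φ ψ φd ψd) := fun s₁ s₂ hs => by
  rw [energyE_eq_add_mul_energyE1 (s := s₁) hm hl hρ hp hε hδ hφ hψ hφd hψd,
    energyE_eq_add_mul_energyE1 (s := s₂) hm hl hρ hp hε hδ hφ hψ hφd hψd]
  gcongr
  exact energyE1_nonneg hm hl hε_nonneg hδ_nonneg

theorem two_mul_mul_le_abs_mul_add_sq (c a b : ℝ) :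
    2 * (c * (a * b)) ≤ |c| * (a ^ 2 + b ^ 2) := by
  calc 2 * (c * (a * b)) ≤ 2 * |c * (a * b)| := by gcongr; exact le_abs_self _
    _ = |c| * (2 * |a| * |b|) := by rw [abs_mul, abs_mul]; ring
    _ ≤ |c| * (|a| ^ 2 + |b| ^ 2) := by gcongr; exact two_mul_le_add_sq _ _
    _ = |c| * (a ^ 2 + b ^ 2) := by rw [sq_abs, sq_abs]

theorem neg_abs_mul_energyJ_le_energyE_zero (hm : 0 ≤ m) (hl : 0 ≤ l) (hσ : 0 ≤ σ)
    (hρ : PiecewiseCont m l ρ0) (hp : PiecewiseCont m l p)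
    (hρ_nonneg : ∀ x ∈ Icc (-m) l, 0 ≤ ρ0 x) (hp_nonneg : ∀ x ∈ Icc (-m) l, 0 ≤ p x)
    (hφ : PiecewiseCont m l φ) (hψ : PiecewiseCont m l ψ) (hψd : PiecewiseCont m l ψd) :
    -|g * k| * energyJ m l ρ0 φ ψ ≤ energyE m l g σ k ρ0 p ε0 δ0 φ ψ φd ψd 0 := by
  have gravity_le :
      pwInt m l (fun x => -|g * k| * (ρ0 x * (φ x ^ 2 + ψ x ^ 2))) ≤
      pwInt m l (fun x => p x * ρ0 x * (ψd x + k * φ x) ^ 2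
        - 2 * g * ρ0 x * k * φ x * ψ x) :=
    pwInt_mono hm hl (by fun_prop) (by fun_prop) fun x hx => by
      have compression_nonneg : 0 ≤ p x * ρ0 x * (ψd x + k * φ x) ^ 2 :=
        mul_nonneg (mul_nonneg (hp_nonneg x hx) (hρ_nonneg x hx)) (sq_nonneg _)
      have young := mul_le_mul_of_nonneg_left
        (two_mul_mul_le_abs_mul_add_sq (g * k) (φ x) (ψ x)) (hρ_nonneg x hx)
      linarith
  rw [pwInt_const_mul] at gravity_le
  have surface_nonneg : 0 ≤ σ * k ^ 2 / 2 * ψ 0 ^ 2 := by positivity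
  simp only [energyE, energyJ, zero_mul, zero_add, zero_div, add_zero]
  linarith

/-- A competitor in the variational problem defining `μ`: an admissible pair with `J = 1`. The
piecewise derivatives are part of the data, since `energyE` takes them as arguments. -/
structure Competitor (m l : ℝ) (ρ0 : ℝ → ℝ) where
  (φ ψ φd ψd : ℝ → ℝ)
  admissible : Admissible m l φ ψ φd ψd
  energyJ_eq_one : energyJ m l ρ0 φ ψ = 1

theorem muInf_eq_iInf :
    muInf m l g σ k ρ0 p ε0 δ0 s =
      ⨅ c : Competitor m l ρ0, energyE m l g σ k ρ0 p ε0 δ0 c.φ c.ψ c.φd c.ψd s := by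
  refine congrArg sInf (Set.ext fun e => ⟨?_, ?_⟩)
  · rintro ⟨φ, ψ, φd, ψd, hadm, hJ, rfl⟩
    exact ⟨⟨φ, ψ, φd, ψd, hadm, hJ⟩, rfl⟩
  · rintro ⟨c, rfl⟩
    exact ⟨c.φ, c.ψ, c.φd, c.ψd, c.admissible, c.energyJ_eq_one, rfl⟩

theorem Competitor.energyE_monotone (c : Competitor m l ρ0) (hm : 0 ≤ m) (hl : 0 ≤ l)
    (hρ : PiecewiseCont m l ρ0) (hp : PiecewiseCont m l p)
    (hε : PiecewiseCont m l ε0) (hδ : PiecewiseCont m l δ0)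
    (hε_nonneg : ∀ x ∈ Icc (-m) l, 0 ≤ ε0 x) (hδ_nonneg : ∀ x ∈ Icc (-m) l, 0 ≤ δ0 x) :
    Monotone (energyE m l g σ k ρ0 p ε0 δ0 c.φ c.ψ c.φd c.ψd) :=
  have ⟨hφ, hψ, _⟩ := c.admissible
  RT.energyE_monotone hm hl hρ hp hε hδ hε_nonneg hδ_nonneg (hφ.piecewiseCont hm hl)
    (hψ.piecewiseCont hm hl) hφ.piecewiseCont_deriv hψ.piecewiseCont_deriv

theorem Competitor.neg_abs_le_energyE_zero (c : Competitor m l ρ0) (hm : 0 ≤ m) (hl : 0 ≤ l)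
    (hσ : 0 ≤ σ) (hρ : PiecewiseCont m l ρ0) (hp : PiecewiseCont m l p)
    (hρ_nonneg : ∀ x ∈ Icc (-m) l, 0 ≤ ρ0 x) (hp_nonneg : ∀ x ∈ Icc (-m) l, 0 ≤ p x) :
    -|g * k| ≤ energyE m l g σ k ρ0 p ε0 δ0 c.φ c.ψ c.φd c.ψd 0 := by
  obtain ⟨hφ, hψ, -⟩ := c.admissible
  simpa only [c.energyJ_eq_one, mul_one] using
    neg_abs_mul_energyJ_le_energyE_zero hm hl hσ hρ hp hρ_nonneg hp_nonneg
      (hφ.piecewiseCont hm hl) (hψ.piecewiseCont hm hl) hψ.piecewiseCont_deriv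

theorem muInf_monotone_general (hm : 0 ≤ m) (hl : 0 ≤ l) (hσ : 0 ≤ σ)
    (hρ : PiecewiseCont m l ρ0) (hp : PiecewiseCont m l p)
    (hε : PiecewiseCont m l ε0) (hδ : PiecewiseCont m l δ0)
    (hρ_nonneg : ∀ x ∈ Icc (-m) l, 0 ≤ ρ0 x) (hp_nonneg : ∀ x ∈ Icc (-m) l, 0 ≤ p x)
    (hε_nonneg : ∀ x ∈ Icc (-m) l, 0 ≤ ε0 x) (hδ_nonneg : ∀ x ∈ Icc (-m) l, 0 ≤ δ0 x)
    (hs₁ : 0 ≤ s₁) (hs : s₁ ≤ s₂) :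
    -|g * k| ≤ muInf m l g σ k ρ0 p ε0 δ0 s₁ ∧
      muInf m l g σ k ρ0 p ε0 δ0 s₁ ≤ muInf m l g σ k ρ0 p ε0 δ0 s₂ := by
  have energy_mono (c : Competitor m l ρ0) :
      Monotone (energyE m l g σ k ρ0 p ε0 δ0 c.φ c.ψ c.φd c.ψd) :=
    c.energyE_monotone hm hl hρ hp hε hδ hε_nonneg hδ_nonneg
  have lower_bound (c : Competitor m l ρ0) :
      -|g * k| ≤ energyE m l g σ k ρ0 p ε0 δ0 c.φ c.ψ c.φd c.ψd s₁ :=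
    (c.neg_abs_le_energyE_zero hm hl hσ hρ hp hρ_nonneg hp_nonneg).trans (energy_mono c hs₁)
  rw [muInf_eq_iInf, muInf_eq_iInf]
  -- `Real.le_iInf` covers the case without competitors, where the infimum is `0` by convention.
  exact ⟨Real.le_iInf lower_bound (neg_nonpos.2 (abs_nonneg _)),
    ciInf_mono ⟨_, forall_mem_range.2 lower_bound⟩ fun c => energy_mono c hs⟩

end

/-- The function `μ` is nondecreasing and bounded below by `-g k`:
for `0 < s₁ ≤ s₂`, `-g k ≤ μ(s₁) ≤ μ(s₂)`. -/
theorem muInf_monotone (m l g σ k : ℝ) (ρ0 p ε0 δ0 : ℝ → ℝ)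
    (hm : 0 < m) (hl : 0 < l) (hg : 0 < g) (hσ : 0 ≤ σ) (hk : 0 < k)
    (hprof : ProfilesHyp m l ρ0 p ε0 δ0) :
    ∀ s₁ s₂ : ℝ, 0 < s₁ → s₁ ≤ s₂ →
      -g * k ≤ muInf m l g σ k ρ0 p ε0 δ0 s₁ ∧
      muInf m l g σ k ρ0 p ε0 δ0 s₁ ≤ muInf m l g σ k ρ0 p ε0 δ0 s₂ := by
  intro s₁ s₂ hs₁ hs
  obtain ⟨hρ, hp, hε, hδ, hρ_pos, hp_pos, hε_pos, hδ_nonneg⟩ := hprof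
  rw [neg_mul, ← abs_of_pos (mul_pos hg hk)]
  exact muInf_monotone_general hm.le hl.le hσ hρ.piecewiseCont hp.piecewiseCont
    hε.piecewiseCont hδ.piecewiseCont (fun x hx => (hρ_pos x hx).le)
    (fun x hx => (hp_pos x hx).le) (fun x hx => (hε_pos x hx).le) hδ_nonneg hs₁.le hs

end RT
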